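/- Telescoped convergence bound (Eq. 20): Suppose π* is a policy maximizing J, i.e. J(π*) ≥ J(π) for every policy π. Then for every integer M ≥ 1, (1/M) ∑_{m=0}^{M−1} ( J(π*) − ∑_{s : p(s)>0} p(s) B_{priorᵐ, πᵐ⁺¹}V(s) ) ≤ (1/(M·β)) ∑_{s : p(s)>0} p(s) ∑_{a∈A} π*(a|s) log( π^M(a|s) / π⁰(a|s) ). -/

import Mathlib

open Finset

/-- A probability distribution on a finite type: nonnegative and sums to one. -/
def IsDist {X : Type*} [Fintype X] (d : X → ℝ) : Prop :=
  (∀ x, 0 ≤ d x) ∧ ∑ x, d x = 1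

/-- Kullback–Leibler divergence: sum over points where `μ` is positive. -/
noncomputable def KL {X : Type*} [Fintype X] (μ ν : X → ℝ) : ℝ :=
  ∑ x, if 0 < μ x then μ x * Real.log (μ x / ν x) else 0

/-- Marginal action distribution of policy `π` under state distribution `p`. -/
noncomputable def margPol {S A : Type*} [Fintype S] [Fintype A]
    (p : S → ℝ) (π : S → A → ℝ) (a : A) : ℝ :=
  ∑ s, p s * π s a

/-- Evaluation operator `B_{q,π} V (s)` (with `F s a = R s a + γ 𝔼[V]` precomputed). -/
noncomputable def Beval {S A : Type*} [Fintype S] [Fintype A]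
    (F : S → A → ℝ) (β : ℝ) (q : A → ℝ) (π : S → A → ℝ) (s : S) : ℝ :=
  ∑ a, if 0 < π s a then π s a * (F s a - (1 / β) * Real.log (π s a / q a)) else 0

/-- Mutual-information-regularized objective `J(π)`. -/
noncomputable def Jobj {S A : Type*} [Fintype S] [Fintype A]
    (p : S → ℝ) (F : S → A → ℝ) (β : ℝ) (π : S → A → ℝ) : ℝ :=
  ∑ s, if 0 < p s then
    p s * ∑ a, (if 0 < π s a then
      π s a * (F s a - (1 / β) * Real.log (π s a / margPol p π a)) else 0)
  else 0

/-- Blahut–Arimoto policy iterates. -/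
noncomputable def BApol {S A : Type*} [Fintype S] [Fintype A]
    (p : S → ℝ) (F : S → A → ℝ) (β : ℝ) (π0 : S → A → ℝ) : ℕ → S → A → ℝ
  | 0 => π0
  | m + 1 => fun s a =>
      ((∑ s', p s' * BApol p F β π0 m s' a) * Real.exp (β * F s a)) /
        ∑ a', (∑ s', p s' * BApol p F β π0 m s' a') * Real.exp (β * F s a')

/-- Blahut–Arimoto prior iterates: the marginal of the `m`-th policy under `p`. -/
noncomputable def BAprior {S A : Type*} [Fintype S] [Fintype A]
    (p : S → ℝ) (F : S → A → ℝ) (β : ℝ) (π0 : S → A → ℝ) (m : ℕ) (a : A) : ℝ :=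
  ∑ s, p s * BApol p F β π0 m s a

theorem ba_exists_pos {S : Type*} [Fintype S] (p : S → ℝ) (hp : IsDist p) : ∃ s, 0 < p s := by
  by_contra h
  push Not at h
  have h1 : ∑ s, p s ≤ 0 := Finset.sum_nonpos (fun s _ => h s)
  have h2 := hp.2
  linarith

theorem ba_marg_pos {S A : Type*} [Fintype S] [Fintype A] (p : S → ℝ) (hp : IsDist p)
    (π : S → A → ℝ) (h : ∀ s a, 0 < π s a) (a : A) : 0 < ∑ s, p s * π s a := by
  obtain ⟨s, hs⟩ := ba_exists_pos p hp
  exact Finset.sum_pos' (fun t _ => mul_nonneg (hp.1 t) (h t a).le)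
    ⟨s, Finset.mem_univ s, mul_pos hs (h s a)⟩

theorem ba_pol_pos {S A : Type*} [Fintype S] [Fintype A] [Nonempty A] (p : S → ℝ) (hp : IsDist p)
    (F : S → A → ℝ) (β : ℝ) (π0 : S → A → ℝ) (h0 : ∀ s a, 0 < π0 s a) (m : ℕ) :
    ∀ s a, 0 < BApol p F β π0 m s a := by
  induction m with
  | zero => exact h0
  | succ m ih =>
    intro s a
    have hq := ba_marg_pos p hp _ ih
    rw [BApol]
    exact div_pos (mul_pos (hq a) (Real.exp_pos _))
      (Finset.sum_pos (fun b _ => mul_pos (hq b) (Real.exp_pos _)) Finset.univ_nonempty)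

theorem ba_beval {A S : Type*} [Fintype S] [Fintype A] [Nonempty A] (F : S → A → ℝ) (β : ℝ)
    (hβ : 0 < β) (q : A → ℝ) (hq : ∀ a, 0 < q a) (π : S → A → ℝ) (s : S)
    (hπ : ∀ a, π s a = q a * Real.exp (β * F s a) / ∑ b, q b * Real.exp (β * F s b)) :
    Beval F β q π s = (1 / β) * Real.log (∑ b, q b * Real.exp (β * F s b)) := by
  have hZ : 0 < ∑ b, q b * Real.exp (β * F s b) :=
    Finset.sum_pos (fun b _ => mul_pos (hq b) (Real.exp_pos _)) Finset.univ_nonempty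
  have hsum : ∑ a, π s a = 1 := by
    simp_rw [hπ]
    rw [← Finset.sum_div, div_self hZ.ne']
  have : ∀ a, (if 0 < π s a then π s a * (F s a - (1 / β) * Real.log (π s a / q a)) else 0)
      = π s a * ((1 / β) * Real.log (∑ b, q b * Real.exp (β * F s b))) := by
    intro a
    have hpos : 0 < π s a := by
      rw [hπ]; exact div_pos (mul_pos (hq a) (Real.exp_pos _)) hZ
    rw [if_pos hpos]
    congr 1
    have e : π s a / q a = Real.exp (β * F s a) / ∑ b, q b * Real.exp (β * F s b) := by
      rw [hπ]; have := (hq a).ne'; field_simp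
    rw [e, Real.log_div (Real.exp_pos _).ne' hZ.ne', Real.log_exp]
    field_simp
    ring
  unfold Beval
  rw [Finset.sum_congr rfl (fun a _ => this a), ← Finset.sum_mul, hsum, one_mul]

theorem ba_if {x y : ℝ} (hx : 0 ≤ x) : (if 0 < x then x * y else 0) = x * y := by
  split_ifs with h
  · rfl
  · have : x = 0 := le_antisymm (not_lt.mp h) hx
    simp [this]

theorem ba_term {p x f β q π π' Z ms : ℝ} (hβ : 0 < β) (hp : 0 ≤ p) (hx : 0 ≤ x) (hq : 0 < q)
    (hπ : 0 < π) (hZ : 0 < Z) (hπ' : π' = q * Real.exp (β * f) / Z) (hms : p * x ≤ ms) :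
    p * (x * (f - (1 / β) * Real.log (x / ms))) - p * x * ((1 / β) * Real.log Z)
      ≤ (1 / β) * (p * (x * (Real.log π' - Real.log π)) + (p * π * (ms / q) - p * x)) := by
  have hms0 : 0 ≤ ms := (mul_nonneg hp hx).trans hms
  rcases (mul_nonneg hp hx).eq_or_lt with h | h
  · have h3 : 0 ≤ p * π * (ms / q) := by positivity
    have h4 : 0 ≤ (1 / β) * (p * π * (ms / q)) := by positivity
    have e1 : ∀ y, p * (x * y) = 0 := fun y => by rw [← mul_assoc, ← h, zero_mul]
    rw [e1, e1, ← h]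
    linarith
  · have hx' : 0 < x := by
      rcases hx.eq_or_lt with h' | h'
      · simp [← h'] at h
      · exact h'
    have hm : 0 < ms := h.trans_le hms
    have hl := Real.log_le_sub_one_of_pos (show 0 < π * ms / (q * x) by positivity)
    rw [Real.log_div (by positivity) (by positivity), Real.log_mul hπ.ne' hm.ne',
      Real.log_mul hq.ne' hx'.ne'] at hl
    have h5 := mul_le_mul_of_nonneg_left hl h.le
    have e5 : p * x * (π * ms / (q * x) - 1) = p * π * (ms / q) - p * x := by
      field_simp
    rw [e5] at h5
    have hl' : Real.log π' = Real.log q + β * f - Real.log Z := by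
      rw [hπ', Real.log_div (by positivity) hZ.ne', Real.log_mul hq.ne' (Real.exp_pos _).ne',
        Real.log_exp]
    rw [Real.log_div hx'.ne' hm.ne', hl']
    have e6 : p * (x * (f - 1 / β * (Real.log x - Real.log ms))) - p * x * (1 / β * Real.log Z)
      = (1 / β) * (p * x * (β * f - Real.log x + Real.log ms - Real.log Z)) := by
      field_simp
      ring
    rw [e6]
    apply mul_le_mul_of_nonneg_left _ (by positivity)
    linarith

theorem ba_step {S A : Type*} [Fintype S] [Fintype A] [Nonempty A]
    (p : S → ℝ) (hp : IsDist p) (β : ℝ) (hβ : 0 < β) (F : S → A → ℝ)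
    (π0 : S → A → ℝ) (hπ0pos : ∀ s a, 0 < π0 s a)
    (πstar : S → A → ℝ) (hπstar : ∀ s, IsDist (πstar s)) (m : ℕ) :
    (Jobj p F β πstar -
            ∑ s, if 0 < p s then
              p s * Beval F β (BAprior p F β π0 m) (BApol p F β π0 (m + 1)) s else 0)
      ≤ (1 / β) * ∑ s, p s * ∑ a, πstar s a *
          (Real.log (BApol p F β π0 (m + 1) s a) - Real.log (BApol p F β π0 m s a)) := by
  have hpos := ba_pol_pos p hp F β π0 hπ0pos m
  have hq : ∀ a, 0 < BAprior p F β π0 m a := ba_marg_pos p hp _ hpos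
  have hZ : ∀ s, 0 < ∑ b, BAprior p F β π0 m b * Real.exp (β * F s b) := fun s =>
    Finset.sum_pos (fun b _ => mul_pos (hq b) (Real.exp_pos _)) Finset.univ_nonempty
  have hsucc : ∀ s a, BApol p F β π0 (m + 1) s a = BAprior p F β π0 m a * Real.exp (β * F s a) /
      ∑ b, BAprior p F β π0 m b * Real.exp (β * F s b) := fun s a => by
    rw [BApol]; rfl
  have hB : ∀ s, Beval F β (BAprior p F β π0 m) (BApol p F β π0 (m + 1)) s = _ :=
    fun s => ba_beval F β hβ _ hq _ s (hsucc s)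
  have hJ : Jobj p F β πstar = ∑ s, p s * ∑ a, πstar s a *
      (F s a - (1 / β) * Real.log (πstar s a / margPol p πstar a)) := by
    unfold Jobj
    refine Finset.sum_congr rfl fun s _ => ?_
    rw [ba_if (hp.1 s)]
    congr 1
    exact Finset.sum_congr rfl fun a _ => ba_if ((hπstar s).1 a)
  have hB2 : (∑ s, if 0 < p s then
      p s * Beval F β (BAprior p F β π0 m) (BApol p F β π0 (m + 1)) s else 0)
      = ∑ s, ∑ a, p s * πstar s a *
        ((1 / β) * Real.log (∑ b, BAprior p F β π0 m b * Real.exp (β * F s b))) := by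
    refine Finset.sum_congr rfl fun s _ => ?_
    rw [ba_if (hp.1 s), hB, ← Finset.sum_mul, ← Finset.mul_sum, (hπstar s).2, mul_one]
  have hms : ∀ s a, p s * πstar s a ≤ margPol p πstar a := fun s a =>
    Finset.single_le_sum (f := fun s => p s * πstar s a)
      (fun t _ => mul_nonneg (hp.1 t) ((hπstar t).1 a)) (Finset.mem_univ s)
  have key := Finset.sum_le_sum fun s (_ : s ∈ Finset.univ) =>
    Finset.sum_le_sum fun a (_ : a ∈ Finset.univ) =>
      ba_term hβ (hp.1 s) ((hπstar s).1 a) (hq a) (hpos s a) (hZ s) (hsucc s a) (hms s a)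
  have hss : ∑ s, ∑ a, p s * πstar s a = 1 := by
    simp_rw [← Finset.mul_sum, (hπstar _).2, mul_one]
    exact hp.2
  have hz : ∑ s, ∑ a, p s * BApol p F β π0 m s a *
      (margPol p πstar a / BAprior p F β π0 m a) = 1 := by
    rw [Finset.sum_comm, ← hss]
    rw [Finset.sum_comm (f := fun s a => p s * πstar s a)]
    refine Finset.sum_congr rfl fun a _ => ?_
    rw [← Finset.sum_mul]
    change BAprior p F β π0 m a * _ = margPol p πstar a
    have := (hq a).ne'
    field_simp
  rw [hJ, hB2]
  simp only [Finset.sum_sub_distrib, ← Finset.mul_sum, Finset.sum_add_distrib] at key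
  simp only [← Finset.mul_sum] at hss hz ⊢
  simp only [Finset.sum_sub_distrib, ← Finset.mul_sum, Finset.sum_add_distrib, ← Finset.sum_mul] at key hss hz ⊢
  rw [hss, hz] at key
  simpa using key

/-- Telescoped convergence bound (Eq. 20). -/
theorem blahut_arimoto_telescoped_bound
    {S A : Type*} [Fintype S] [Fintype A] [Nonempty S] [Nonempty A]
    (p : S → ℝ) (hp : IsDist p)
    (R : S → A → ℝ) (P : S → A → S → ℝ) (hP : ∀ s a, IsDist (P s a))
    (V : S → ℝ) (β : ℝ) (hβ : 0 < β) (γ : ℝ) (hγ : 0 < γ ∧ γ < 1)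
    (F : S → A → ℝ) (hF : ∀ s a, F s a = R s a + γ * ∑ s', P s a s' * V s')
    (π0 : S → A → ℝ) (hπ0 : ∀ s, IsDist (π0 s)) (hπ0pos : ∀ s a, 0 < π0 s a)
    (πstar : S → A → ℝ) (hπstar : ∀ s, IsDist (πstar s))
    (hopt : ∀ π : S → A → ℝ, (∀ s, IsDist (π s)) → Jobj p F β π ≤ Jobj p F β πstar)
    (M : ℕ) (hM : 1 ≤ M) :
    (1 / (M : ℝ)) *
        ∑ m ∈ Finset.range M,
          (Jobj p F β πstar -
            ∑ s, if 0 < p s then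
              p s * Beval F β (BAprior p F β π0 m) (BApol p F β π0 (m + 1)) s else 0)
      ≤ (1 / ((M : ℝ) * β)) *
          ∑ s, (if 0 < p s then
            p s * ∑ a, πstar s a * Real.log (BApol p F β π0 M s a / π0 s a) else 0) := by
  have hMpos : (0 : ℝ) < M := by exact_mod_cast hM
  have h1 := Finset.sum_le_sum fun m (_ : m ∈ Finset.range M) =>
    ba_step p hp β hβ F π0 hπ0pos πstar hπstar m
  have h2 := mul_le_mul_of_nonneg_left h1 (show 0 ≤ 1 / (M : ℝ) by positivity)
  refine h2.trans (le_of_eq ?_)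
  rw [← Finset.mul_sum, ← mul_assoc, one_div_mul_one_div]
  congr 1
  rw [Finset.sum_comm]
  refine Finset.sum_congr rfl fun s _ => ?_
  rw [ba_if (hp.1 s), ← Finset.mul_sum, Finset.sum_comm]
  congr 1
  refine Finset.sum_congr rfl fun a _ => ?_
  rw [← Finset.mul_sum, Finset.sum_range_sub (fun m => Real.log (BApol p F β π0 m s a)),
    Real.log_div (ba_pol_pos p hp F β π0 hπ0pos M s a).ne' (hπ0pos s a).ne']
  rfl
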